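/- The polynomial f in ℚ[x₁, …, x₈] given by f = x₁²x₅² + x₁²x₆² + 2x₁x₃x₅x₇ + 2x₁x₃x₆x₈ + 2x₁x₄x₅x₈ − 2x₁x₄x₆x₇ + x₂²x₅² + x₂²x₆² − 2x₂x₃x₅x₈ + 2x₂x₃x₆x₇ + 2x₂x₄x₅x₇ + 2x₂x₄x₆x₈ + x₃²x₇² + x₃²x₈² + x₄²x₇² + x₄²x₈² − 2 (equivalently, f = A² + B² − 2 where A = x₁x₅ + x₂x₆ + x₃x₇ + x₄x₈ and B = x₁x₆ − x₂x₅ + x₃x₈ − x₄x₇) is absolutely irreducible, i.e., it is irreducible as an element of 𝔸[x₁, …, x₈] for 𝔸 an algebraic closure of ℚ. -/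

import Mathlib

open MvPolynomial

noncomputable section

/-- `A = x₁x₅ + x₂x₆ + x₃x₇ + x₄x₈` (variables `X 0, …, X 7` stand for `x₁, …, x₈`). -/
def Apoly : MvPolynomial (Fin 8) ℚ :=
  X 0 * X 4 + X 1 * X 5 + X 2 * X 6 + X 3 * X 7

/-- `B = x₁x₆ − x₂x₅ + x₃x₈ − x₄x₇`. -/
def Bpoly : MvPolynomial (Fin 8) ℚ :=
  X 0 * X 5 - X 1 * X 4 + X 2 * X 7 - X 3 * X 6

/-- The quartic `f` expressing the mutual-unbiasedness constraint in dimension 2. -/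
def fpoly : MvPolynomial (Fin 8) ℚ :=
  X 0 ^ 2 * X 4 ^ 2 + X 0 ^ 2 * X 5 ^ 2
    + 2 * X 0 * X 2 * X 4 * X 6 + 2 * X 0 * X 2 * X 5 * X 7
    + 2 * X 0 * X 3 * X 4 * X 7 - 2 * X 0 * X 3 * X 5 * X 6
    + X 1 ^ 2 * X 4 ^ 2 + X 1 ^ 2 * X 5 ^ 2
    - 2 * X 1 * X 2 * X 4 * X 7 + 2 * X 1 * X 2 * X 5 * X 6
    + 2 * X 1 * X 3 * X 4 * X 6 + 2 * X 1 * X 3 * X 5 * X 7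
    + X 2 ^ 2 * X 6 ^ 2 + X 2 ^ 2 * X 7 ^ 2
    + X 3 ^ 2 * X 6 ^ 2 + X 3 ^ 2 * X 7 ^ 2
    - 2

/-!
Write `⟨u, v⟩ = A + iB`. In the coordinates `z = x + iy`, `z̄ = x - iy` of `u` and `w`, `w̄` of `v`
the squared modulus factors as `A ^ 2 + B ^ 2 = (∑ z̄ₖ wₖ) (∑ zₖ w̄ₖ)`, and this coordinate change
is invertible once `2` is. For a fixed `k` the polynomial `(∑ z̄ₗ wₗ) (∑ zₗ w̄ₗ) - c` has degree one
in `zₖ`, with leading coefficient `(∑ z̄ₗ wₗ) w̄ₖ` prime to its constant term: modulo the first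
factor that term is the unit `-c`, and the variable `w̄ₖ` does not divide it. So it is irreducible
over an algebraically closed field of characteristic other than `2`, and irreducibility descends to
subfields.
-/

section Criterion

variable {σ R : Type*} [CommRing R]

lemma mem_supported_compl_singleton {i : σ} {p : MvPolynomial σ R} :
    p ∈ supported R {i}ᶜ ↔ i ∉ p.vars := by
  simp [mem_supported]

lemma isLocalHom_map_of_injective {S : Type*} [CommRing S] (f : R →+* S) [IsLocalHom f]
    (hf : Function.Injective f) : IsLocalHom (map (σ := σ) f) where
  map_nonunit p hp := by
    simpa only [MvPolynomial.isUnit_iff, coeff_map, isUnit_map_iff, IsNilpotent.map_iff hf] using hp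

lemma irreducible_mul_X_mul_X_add_sub_C [IsDomain R] {a b : MvPolynomial σ R} {i j : σ} {c : R}
    (ha : a ∈ supported R {i}ᶜ) (hb : b ∈ supported R {i}ᶜ) (hij : j ≠ i) (ha0 : a ≠ 0)
    (hc : IsUnit c) (hab : constantCoeff (a * b) ≠ c) :
    Irreducible (a * (X j * X i + b) - C c) := by
  have hj : (X j : MvPolynomial σ R) ∈ supported R {i}ᶜ := X_mem_supported.2 hij
  have hC : C c ∈ supported R {i}ᶜ := algebraMap_mem _ c
  have a_coprime : IsCoprime a (a * b - C c) := by
    obtain ⟨d, hd⟩ := hc.exists_left_inv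
    refine ⟨C d * b, -C d, ?_⟩
    have hCd : C d * C c = (1 : MvPolynomial σ R) := by rw [← C_mul, hd, C_1]
    linear_combination hCd
  have X_relPrime : IsRelPrime (X j) (a * b - C c) := by
    rw [X_prime.irreducible.isRelPrime_iff_not_dvd]
    intro X_dvd
    refine hab (sub_eq_zero.1 ?_)
    simpa only [constantCoeff_X, zero_dvd_iff, map_sub, constantCoeff_C] using
      map_dvd constantCoeff X_dvd
  have mul_relPrime : IsRelPrime (a * X j) (a * b - C c) := fun p hp hpm =>
    X_relPrime ((a_coprime.symm.of_isCoprime_of_dvd_left hpm).dvd_of_dvd_mul_left hp) hpm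
  have irred : Irreducible (a * X j * X i + (a * b - C c)) :=
    irreducible_mul_X_add _ _ i (mul_ne_zero ha0 (X_ne_zero j))
      (mem_supported_compl_singleton.1 (mul_mem ha hj))
      (mem_supported_compl_singleton.1 (sub_mem (mul_mem ha hb) hC)) mul_relPrime
  convert irred using 1
  ring

end Criterion

section ConjugateCoordinates

variable {κ R : Type*} [CommRing R]

lemma C_sq_eq_neg_one {σ : Type*} {I : R} (hI : I ^ 2 = -1) :
    (C I : MvPolynomial σ R) ^ 2 = -1 := by
  rw [← C_pow, hI, C_neg, C_1]

lemma two_mul_C_invOf_two {σ : Type*} [Invertible (2 : R)] : 2 * (C ⅟2 : MvPolynomial σ R) = 1 := by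
  rw [← map_ofNat C 2, ← C_mul, mul_invOf_self, C_1]

/-- The change of variables to the complex coordinates `z = x + I y` and `z̄ = x - I y`, meant for
`I ^ 2 = -1`: the variables `(k, 0)` and `(k, 1)` stand for `zₖ` and `z̄ₖ` in the source, and for
the real and imaginary parts `xₖ` and `yₖ` in the target. -/
def conjCoordHom (κ : Type*) (I : R) :
    MvPolynomial (κ × Fin 2) R →ₐ[R] MvPolynomial (κ × Fin 2) R :=
  aeval fun
    | (k, 0) => X (k, 0) + C I * X (k, 1)
    | (k, 1) => X (k, 0) - C I * X (k, 1)

/-- The change of variables inverse to `conjCoordHom`: `x = (z + z̄) / 2` and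
`y = I (z̄ - z) / 2`. -/
def realCoordHom (κ : Type*) [Invertible (2 : R)] (I : R) :
    MvPolynomial (κ × Fin 2) R →ₐ[R] MvPolynomial (κ × Fin 2) R :=
  aeval fun
    | (k, 0) => C ⅟2 * (X (k, 0) + X (k, 1))
    | (k, 1) => C ⅟2 * C I * (X (k, 1) - X (k, 0))

lemma conjCoordHom_X_zero (I : R) (k : κ) :
    conjCoordHom κ I (X (k, 0)) = X (k, 0) + C I * X (k, 1) :=
  aeval_X _ _

lemma conjCoordHom_X_one (I : R) (k : κ) :
    conjCoordHom κ I (X (k, 1)) = X (k, 0) - C I * X (k, 1) :=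
  aeval_X _ _

variable [Invertible (2 : R)]

lemma realCoordHom_X_zero (I : R) (k : κ) :
    realCoordHom κ I (X (k, 0)) = C ⅟2 * (X (k, 0) + X (k, 1)) :=
  aeval_X _ _

lemma realCoordHom_X_one (I : R) (k : κ) :
    realCoordHom κ I (X (k, 1)) = C ⅟2 * C I * (X (k, 1) - X (k, 0)) :=
  aeval_X _ _

lemma conjCoordHom_comp_realCoordHom {I : R} (hI : I ^ 2 = -1) :
    (conjCoordHom κ I).comp (realCoordHom κ I) = AlgHom.id R _ := by
  refine algHom_ext fun
    | (k, 0) => ?_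
    | (k, 1) => ?_
  · simp only [AlgHom.comp_apply, AlgHom.id_apply, realCoordHom_X_zero, map_mul, map_add,
      algHom_C, algebraMap_eq, conjCoordHom_X_zero, conjCoordHom_X_one]
    linear_combination X (k, 0) * two_mul_C_invOf_two (R := R)
  · simp only [AlgHom.comp_apply, AlgHom.id_apply, realCoordHom_X_one, map_mul, map_sub,
      algHom_C, algebraMap_eq, conjCoordHom_X_zero, conjCoordHom_X_one]
    linear_combination X (k, 1) * two_mul_C_invOf_two (R := R) -
      2 * C ⅟2 * X (k, 1) * C_sq_eq_neg_one hI

lemma realCoordHom_comp_conjCoordHom {I : R} (hI : I ^ 2 = -1) :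
    (realCoordHom κ I).comp (conjCoordHom κ I) = AlgHom.id R _ := by
  refine algHom_ext fun
    | (k, 0) => ?_
    | (k, 1) => ?_
  · simp only [AlgHom.comp_apply, AlgHom.id_apply, conjCoordHom_X_zero, map_mul, map_add,
      algHom_C, algebraMap_eq, realCoordHom_X_zero, realCoordHom_X_one]
    linear_combination X (k, 0) * two_mul_C_invOf_two (R := R) +
      C ⅟2 * (X (k, 1) - X (k, 0)) * C_sq_eq_neg_one hI
  · simp only [AlgHom.comp_apply, AlgHom.id_apply, conjCoordHom_X_one, map_mul, map_sub,
      algHom_C, algebraMap_eq, realCoordHom_X_zero, realCoordHom_X_one]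
    linear_combination X (k, 1) * two_mul_C_invOf_two (R := R) -
      C ⅟2 * (X (k, 1) - X (k, 0)) * C_sq_eq_neg_one hI

/-- `conjCoordHom` as an automorphism of the polynomial algebra, with inverse `realCoordHom`. -/
def conjCoordEquiv (κ : Type*) {I : R} (hI : I ^ 2 = -1) :
    MvPolynomial (κ × Fin 2) R ≃ₐ[R] MvPolynomial (κ × Fin 2) R :=
  AlgEquiv.ofAlgHom (conjCoordHom κ I) (realCoordHom κ I)
    (conjCoordHom_comp_realCoordHom hI) (realCoordHom_comp_conjCoordHom hI)

end ConjugateCoordinates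

section HermitianProduct

variable (ι R : Type*) [Fintype ι] [CommRing R]

/-- The real part of the Hermitian product `⟨u, v⟩ = ∑ ūₖ vₖ` of two generic vectors. The variables
`(inl k, 0)` and `(inl k, 1)` are the real and imaginary parts of `uₖ`, and `(inr k, 0)` and
`(inr k, 1)` those of `vₖ`. -/
def innerRe : MvPolynomial ((ι ⊕ ι) × Fin 2) R :=
  ∑ k, (X (.inl k, 0) * X (.inr k, 0) + X (.inl k, 1) * X (.inr k, 1))

/-- The imaginary part of the Hermitian product `⟨u, v⟩ = ∑ ūₖ vₖ`, in the variables of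
`innerRe`. -/
def innerIm : MvPolynomial ((ι ⊕ ι) × Fin 2) R :=
  ∑ k, (X (.inl k, 0) * X (.inr k, 1) - X (.inl k, 1) * X (.inr k, 0))

/-- The polynomial `|⟨u, v⟩|² - c`, whose real zeros are the pairs with squared overlap
`c`. -/
def overlapPoly (c : R) : MvPolynomial ((ι ⊕ ι) × Fin 2) R :=
  innerRe ι R ^ 2 + innerIm ι R ^ 2 - C c

/-- The polynomial `|⟨u, v⟩|² - c` in complex coordinates: `(·, 0)` stands for a coordinate of `u`
or `v`, and `(·, 1)` for its conjugate. -/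
def conjOverlapPoly (c : R) : MvPolynomial ((ι ⊕ ι) × Fin 2) R :=
  (∑ k, X (.inl k, 1) * X (.inr k, 0)) * (∑ k, X (.inl k, 0) * X (.inr k, 1)) - C c

variable {ι R}

lemma map_overlapPoly {S : Type*} [CommRing S] (f : R →+* S) (c : R) :
    map f (overlapPoly ι R c) = overlapPoly ι S (f c) := by
  simp [overlapPoly, innerRe, innerIm]

lemma conjCoordHom_sum_conj_mul {I : R} (hI : I ^ 2 = -1) :
    conjCoordHom (ι ⊕ ι) I (∑ k, X (.inl k, 1) * X (.inr k, 0)) =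
      innerRe ι R + C I * innerIm ι R := by
  simp only [map_sum, map_mul, conjCoordHom_X_zero, conjCoordHom_X_one, innerRe, innerIm,
    Finset.mul_sum, ← Finset.sum_add_distrib]
  refine Finset.sum_congr rfl fun k _ => ?_
  linear_combination -X (.inl k, 1) * X (.inr k, 1) * C_sq_eq_neg_one hI

lemma conjCoordHom_sum_mul_conj {I : R} (hI : I ^ 2 = -1) :
    conjCoordHom (ι ⊕ ι) I (∑ k, X (.inl k, 0) * X (.inr k, 1)) =
      innerRe ι R - C I * innerIm ι R := by
  simp only [map_sum, map_mul, conjCoordHom_X_zero, conjCoordHom_X_one, innerRe, innerIm,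
    Finset.mul_sum, ← Finset.sum_sub_distrib]
  refine Finset.sum_congr rfl fun k _ => ?_
  linear_combination -X (.inl k, 1) * X (.inr k, 1) * C_sq_eq_neg_one hI

lemma conjCoordHom_conjOverlapPoly {I : R} (hI : I ^ 2 = -1) (c : R) :
    conjCoordHom (ι ⊕ ι) I (conjOverlapPoly ι R c) = overlapPoly ι R c := by
  rw [conjOverlapPoly, map_sub, map_mul, conjCoordHom_sum_conj_mul hI,
    conjCoordHom_sum_mul_conj hI, algHom_C, algebraMap_eq, overlapPoly]
  linear_combination -innerIm ι R ^ 2 * C_sq_eq_neg_one hI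

lemma irreducible_conjOverlapPoly [Nonempty ι] [IsDomain R] {c : R} (hc : IsUnit c) :
    Irreducible (conjOverlapPoly ι R c) := by
  classical
  obtain ⟨k₀⟩ := ‹Nonempty ι›
  have hX (p : (ι ⊕ ι) × Fin 2) (hp : p ≠ (.inl k₀, 0)) :
      (X p : MvPolynomial _ R) ∈ supported R {(.inl k₀, 0)}ᶜ := X_mem_supported.2 hp
  have sum_ne_zero : (∑ k : ι, X (.inl k, 1) * X (.inr k, 0) :
      MvPolynomial ((ι ⊕ ι) × Fin 2) R) ≠ 0 := fun h => by
    simpa using congrArg (eval fun p => if p = (.inl k₀, 1) ∨ p = (.inr k₀, 0) then 1 else 0) h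
  have sum_split : (∑ k, X (.inl k, 0) * X (.inr k, 1) : MvPolynomial ((ι ⊕ ι) × Fin 2) R) =
      X (.inr k₀, 1) * X (.inl k₀, 0) +
        ∑ k ∈ Finset.univ.erase k₀, X (.inl k, 0) * X (.inr k, 1) := by
    rw [← Finset.add_sum_erase _ _ (Finset.mem_univ k₀), mul_comm]
  rw [conjOverlapPoly, sum_split]
  refine irreducible_mul_X_mul_X_add_sub_C ?_ ?_ (by simp) sum_ne_zero hc ?_
  · exact sum_mem fun k _ => mul_mem (hX _ (by simp)) (hX _ (by simp))
  · exact sum_mem fun k hk =>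
      mul_mem (hX _ (by simpa using Finset.ne_of_mem_erase hk)) (hX _ (by simp))
  · simpa using hc.ne_zero.symm

lemma irreducible_overlapPoly_of_sq_eq_neg_one [Nonempty ι] [IsDomain R] [Invertible (2 : R)]
    {I : R} (hI : I ^ 2 = -1) {c : R} (hc : IsUnit c) : Irreducible (overlapPoly ι R c) := by
  rw [← conjCoordHom_conjOverlapPoly hI]
  exact (MulEquiv.irreducible_iff (conjCoordEquiv (ι ⊕ ι) hI)).2 (irreducible_conjOverlapPoly hc)

theorem stmt17_general [Nonempty ι] {K : Type*} [Field K] (h2 : (2 : K) ≠ 0) {c : K}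
    (hc : c ≠ 0) : Irreducible (overlapPoly ι K c) := by
  let φ := algebraMap K (AlgebraicClosure K)
  have φ_injective : Function.Injective φ := φ.injective
  obtain ⟨I, hI⟩ := IsAlgClosed.exists_pow_nat_eq (-1 : AlgebraicClosure K) two_pos
  have : Invertible (2 : AlgebraicClosure K) := by
    refine invertibleOfNonzero ?_
    rw [← map_ofNat φ 2]
    exact (map_ne_zero φ).2 h2
  have := isLocalHom_map_of_injective (σ := (ι ⊕ ι) × Fin 2) φ φ_injective
  refine Irreducible.of_map (f := map φ) ?_
  rw [map_overlapPoly]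
  exact irreducible_overlapPoly_of_sq_eq_neg_one hI ((map_ne_zero φ).2 hc).isUnit

end HermitianProduct

lemma fpoly_eq : fpoly = Apoly ^ 2 + Bpoly ^ 2 - 2 := by
  unfold fpoly Apoly Bpoly
  ring

/-- The numbering `x₁, …, x₈` of the real and imaginary parts of the coordinates of two vectors
in dimension `2`. -/
def coordNumbering : (Fin 2 ⊕ Fin 2) × Fin 2 ≃ Fin 8 :=
  (finSumFinEquiv.prodCongr (Equiv.refl (Fin 2))).trans finProdFinEquiv

lemma rename_overlapPoly : rename coordNumbering (overlapPoly (Fin 2) ℚ 2) = fpoly := by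
  have rename_innerRe : rename coordNumbering (innerRe (Fin 2) ℚ) = Apoly := by
    simp only [innerRe, Fin.sum_univ_two, map_add, map_mul, rename_X, Apoly, ← add_assoc]
    rfl
  have rename_innerIm : rename coordNumbering (innerIm (Fin 2) ℚ) = Bpoly := by
    simp only [innerIm, Fin.sum_univ_two, map_add, map_sub, map_mul, rename_X, Bpoly,
      ← add_sub_assoc]
    rfl
  rw [overlapPoly, map_sub, map_add, map_pow, map_pow, rename_innerRe, rename_innerIm, rename_C,
    map_ofNat, fpoly_eq]

/-- The polynomial `f ∈ ℚ[x₁,…,x₈]` (equal to `A² + B² − 2`) is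
absolutely irreducible: it is irreducible over an algebraic closure of `ℚ`. -/
theorem stmt17 :
    fpoly = Apoly ^ 2 + Bpoly ^ 2 - 2
    ∧ Irreducible (MvPolynomial.map (algebraMap ℚ (AlgebraicClosure ℚ)) fpoly) := by
  refine ⟨fpoly_eq, ?_⟩
  rw [← rename_overlapPoly, map_rename, map_overlapPoly, map_ofNat]
  exact (MulEquiv.irreducible_iff (renameEquiv _ coordNumbering)).2
    (stmt17_general two_ne_zero two_ne_zero)

end
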